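/- arXiv:1804.02227 — 2 statements merged into one kernel-verified Lean document; each statement's English description precedes it below -/
import Mathlib

section
/- Let μ be a finite positive Borel measure on [0,1) which is a Carleson measure, and let 0 < p < ∞ and α > −1. Then there exists a constant C = C(p, α, μ) > 0 such that for every f in the weighted Bergman space A^p_α, ∫_{[0,1)} M_∞(r, f)^p (1−r)^{α+1} dμ(r) ≤ C ‖f‖_{A^p_α}^p, where M_∞(r, f) = sup_{|z| = r} |f(z)|. -/
open MeasureTheory Set Metric Filter Asymptotics
open scoped ENNReal

/-- Normalized area measure on `ℂ`: Lebesgue area divided by `π`,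
so that the unit disc has total mass `1`. -/
noncomputable def dA : Measure ℂ := (ENNReal.ofReal Real.pi)⁻¹ • volume

/-- The (weighted) Bergman norm `‖f‖_{A^p_α} = ((α+1) ∫_𝔻 (1-|z|²)^α |f(z)|^p dA)^{1/p}`,
as an extended real number. -/
noncomputable def bergmanNorm (p α : ℝ) (f : ℂ → ℂ) : ℝ≥0∞ :=
  (ENNReal.ofReal (α + 1) *
    ∫⁻ z in ball (0 : ℂ) 1, ENNReal.ofReal ((1 - ‖z‖ ^ 2) ^ α * ‖f z‖ ^ p) ∂dA) ^ (1 / p)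

/-- The Dirichlet-type norm `‖f‖_{𝒟^p_α} = |f(0)| + ‖f′‖_{A^p_α}`. -/
noncomputable def dirichletNorm (p α : ℝ) (f : ℂ → ℂ) : ℝ≥0∞ :=
  ENNReal.ofReal ‖f 0‖ + bergmanNorm p α (deriv f)

/-- The Hardy `H^1` norm `sup_{0 ≤ r < 1} (2π)⁻¹ ∫_0^{2π} |f(re^{iθ})| dθ`. -/
noncomputable def hardyNorm (f : ℂ → ℂ) : ℝ≥0∞ :=
  ⨆ r ∈ Ico (0 : ℝ) 1,
    (ENNReal.ofReal (2 * Real.pi))⁻¹ *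
      ∫⁻ θ in Ioc (0 : ℝ) (2 * Real.pi),
        ENNReal.ofReal ‖f ((r : ℂ) * Complex.exp ((θ : ℂ) * Complex.I))‖

/-- The operator `I_μ f(z) = ∫_{[0,1)} f(t)/(1-tz) dμ(t)`. -/
noncomputable def Imu (μ : Measure ℝ) (f : ℂ → ℂ) (z : ℂ) : ℂ :=
  ∫ t : ℝ, f (t : ℂ) / (1 - (t : ℂ) * z) ∂μ

/-- The moment of order `n` of `μ`. -/
noncomputable def moment (μ : Measure ℝ) (n : ℕ) : ℝ := ∫ t : ℝ, t ^ n ∂μ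

/-- `M_∞(r, f) = sup_{|z| = r} |f(z)|`. -/
noncomputable def Minf (f : ℂ → ℂ) (r : ℝ) : ℝ := ⨆ z ∈ sphere (0 : ℂ) r, ‖f z‖

/-! By Jensen's formula `log |f|` lies below its circle averages, and by Jensen's inequality for
`exp` so does `|f| ^ p`, for every `p > 0`. Integrating over the radii of a disc of radius
`(1 - |w|) / 2` about `w` bounds `|f w| ^ p * (1 - |w|) ^ (α + 2)` by a multiple of `ν (A |w|)`,
where `ν = (1 - |z|²)^α |f|^p dA` and `A r` is the annulus where `1 - |z|` is comparable with
`1 - r`. Hence the integrand `M_∞(r, f) ^ p * (1 - r) ^ (α + 1)` is at most a multiple of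
`ν (A r) / (1 - r)`. By Tonelli the integral of the latter against `μ` is the `ν`-integral over `z`
of the mass that `dμ(r) / (1 - r)` gives to `{r | 1 - r ≈ 1 - |z|}`, and the Carleson condition
bounds that mass uniformly in `z`. -/

lemma log_norm_le_circleAverage_log_norm {f : ℂ → ℂ} {c : ℂ} {R : ℝ}
    (hf : AnalyticOnNhd ℂ f (closedBall c |R|)) (hfc : f c ≠ 0) :
    Real.log ‖f c‖ ≤ Real.circleAverage (Real.log ‖f ·‖) c R := by
  rcases eq_or_ne R 0 with rfl | hR
  · simp
  rw [hf.circleAverage_log_norm hR hfc, le_add_iff_nonneg_left]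
  refine finsum_nonneg fun u ↦ ?_
  by_cases hu : u ∈ closedBall c |R|
  · refine mul_nonneg (mod_cast MeromorphicOn.AnalyticOnNhd.divisor_nonneg hf u) ?_
    rcases eq_or_ne u c with rfl | huc
    · simp
    rw [← Real.log_abs, abs_mul, abs_inv, abs_norm, ← div_eq_mul_inv]
    refine Real.log_nonneg ((one_le_div (norm_pos_iff.2 (sub_ne_zero.2 huc.symm))).2 ?_)
    rwa [← dist_eq_norm, dist_comm]
  · simp [hu]

lemma eventually_codiscreteWithin_sphere_ne_zero {f : ℂ → ℂ} {c : ℂ} {R : ℝ}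
    (hf : AnalyticOnNhd ℂ f (closedBall c |R|)) (hfc : f c ≠ 0) :
    ∀ᶠ z in codiscreteWithin (sphere c |R|), f z ≠ 0 :=
  codiscreteWithin_mono sphere_subset_closedBall <|
    hf.preimage_zero_mem_codiscreteWithin hfc (mem_closedBall_self (abs_nonneg R))
      ((convex_closedBall c |R|).isConnected (nonempty_closedBall.2 (abs_nonneg R)))

lemma map_circleAverage_le_circleAverage_of_convexOn {E : Type*} [NormedAddCommGroup E]
    [NormedSpace ℝ E] [CompleteSpace E] {g : E → ℝ} {s : Set E} {u : ℂ → E} {c : ℂ} {R : ℝ}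
    (hg : ConvexOn ℝ s g) (hgc : ContinuousOn g s) (hs : IsClosed s)
    (hus : ∀ z ∈ sphere c |R|, u z ∈ s) (hu : CircleIntegrable u c R)
    (hgu : CircleIntegrable (fun z ↦ g (u z)) c R) :
    g (Real.circleAverage u c R) ≤ Real.circleAverage (fun z ↦ g (u z)) c R := by
  have hpi : (0 : ℝ) ≤ 2 * Real.pi := Real.two_pi_pos.le
  rw [Real.circleAverage_eq_intervalAverage, Real.circleAverage_eq_intervalAverage]
  refine hg.map_set_average_le hgc hs ?_ ?_
    (.of_forall fun θ ↦ hus _ (circleMap_mem_sphere' c R θ)) hu.def' hgu.def' <;>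
    simp [uIoc_of_le hpi, Real.pi_pos, ENNReal.mul_eq_top]

lemma norm_rpow_le_circleAverage {f : ℂ → ℂ} {c : ℂ} {R p : ℝ}
    (hf : AnalyticOnNhd ℂ f (closedBall c |R|)) (hp : 0 < p) :
    ‖f c‖ ^ p ≤ Real.circleAverage (fun z ↦ ‖f z‖ ^ p) c R := by
  rcases eq_or_ne R 0 with rfl | hR
  · simp
  rcases eq_or_ne (f c) 0 with hfc | hfc
  · rw [hfc, norm_zero, Real.zero_rpow hp.ne']
    exact Real.circleAverage_nonneg_of_nonneg fun _ _ ↦ by positivity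
  have hlog : CircleIntegrable (fun z ↦ p * Real.log ‖f z‖) c R :=
    (hf.mono sphere_subset_closedBall).meromorphicOn.circleIntegrable_log_norm.const_mul p
  have hpow : CircleIntegrable (fun z ↦ ‖f z‖ ^ p) c R :=
    ((hf.mono sphere_subset_closedBall).continuousOn.norm.rpow_const
      fun _ _ ↦ .inr hp.le).circleIntegrable'
  have hexp : (fun z ↦ ‖f z‖ ^ p) =ᶠ[codiscreteWithin (sphere c |R|)]
      fun z ↦ Real.exp (p * Real.log ‖f z‖) := by
    filter_upwards [eventually_codiscreteWithin_sphere_ne_zero hf hfc] with z hz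
    rw [Real.rpow_def_of_pos (norm_pos_iff.2 hz), mul_comm]
  calc ‖f c‖ ^ p = Real.exp (p * Real.log ‖f c‖) := by
        rw [Real.rpow_def_of_pos (norm_pos_iff.2 hfc), mul_comm]
    _ ≤ Real.exp (p * Real.circleAverage (Real.log ‖f ·‖) c R) := by
        gcongr; exact log_norm_le_circleAverage_log_norm hf hfc
    _ = Real.exp (Real.circleAverage (fun z ↦ p * Real.log ‖f z‖) c R) := by
        rw [← smul_eq_mul, ← Real.circleAverage_fun_smul]; rfl
    _ ≤ Real.circleAverage (fun z ↦ Real.exp (p * Real.log ‖f z‖)) c R :=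
        map_circleAverage_le_circleAverage_of_convexOn convexOn_exp Real.continuous_exp.continuousOn
          isClosed_univ (fun _ _ ↦ mem_univ _) hlog (hpow.congr_codiscreteWithin hexp)
    _ = Real.circleAverage (fun z ↦ ‖f z‖ ^ p) c R :=
        (Real.circleAverage_congr_codiscreteWithin hexp hR).symm

lemma lintegral_eq_lintegral_circleMap (c : ℂ) {g : ℂ → ℝ≥0∞} (hg : Measurable g) :
    ∫⁻ z, g z = ∫⁻ r in Ioi (0 : ℝ), ENNReal.ofReal r *
      ∫⁻ θ in Ioo (-Real.pi) Real.pi, g (circleMap c r θ) := by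
  have hpolar (q : ℝ × ℝ) : c + Complex.polarCoord.symm q = circleMap c q.1 q.2 := by
    simp [circleMap, Complex.exp_mul_I]
  calc ∫⁻ z, g z = ∫⁻ q in Ioi 0 ×ˢ Ioo (-Real.pi) Real.pi,
        ENNReal.ofReal q.1 * g (circleMap c q.1 q.2) := by
        rw [← lintegral_add_left_eq_self g c, ← Complex.lintegral_comp_polarCoord_symm]
        simp only [hpolar, smul_eq_mul, polarCoord_target]
    _ = _ := by
        rw [Measure.volume_eq_prod, ← Measure.prod_restrict, lintegral_prod _ (by fun_prop)]
        simp_rw [lintegral_const_mul' _ _ ENNReal.ofReal_ne_top]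

lemma enorm_circleAverage_le_lintegral_enorm {E : Type*} [NormedAddCommGroup E] [NormedSpace ℝ E]
    (u : ℂ → E) (c : ℂ) (r : ℝ) :
    ENNReal.ofReal (2 * Real.pi) * ‖Real.circleAverage u c r‖ₑ ≤
      ∫⁻ θ in Ioo (-Real.pi) Real.pi, ‖u (circleMap c r θ)‖ₑ := by
  have havg : (2 * Real.pi) • Real.circleAverage u c r =
      ∫ θ in Ioc (-Real.pi) Real.pi, u (circleMap c r θ) := by
    have hper := ((periodic_circleMap c r).comp u).intervalIntegral_add_eq 0 (-Real.pi)
    rw [show (-Real.pi + 2 * Real.pi) = Real.pi by ring, zero_add] at hper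
    rw [← intervalIntegral.integral_of_le (by linarith [Real.pi_pos]), Real.circleAverage_def,
      smul_inv_smul₀ Real.two_pi_pos.ne']
    exact hper
  rw [← Real.enorm_of_nonneg Real.two_pi_pos.le, ← enorm_smul, havg, restrict_Ioo_eq_restrict_Ioc]
  exact enorm_integral_le_lintegral_enorm _

lemma dA_ball (c : ℂ) {R : ℝ} (hR : 0 ≤ R) : dA (ball c R) = ENNReal.ofReal (R ^ 2) := by
  rw [dA, Measure.smul_apply, Complex.volume_ball, smul_eq_mul, ENNReal.ofReal_pow hR, mul_comm,
    ← NNReal.coe_real_pi, ENNReal.ofReal_coe_nnreal, mul_assoc,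
    ENNReal.mul_inv_cancel (by simpa using NNReal.pi_ne_zero) ENNReal.coe_ne_top, mul_one]

lemma lintegral_ball_eq_lintegral_circleMap (c : ℂ) (R : ℝ) {g : ℂ → ℝ≥0∞}
    (hg : Measurable ((ball c R).indicator g)) :
    ∫⁻ z in ball c R, g z = ∫⁻ r in Ioo 0 R, ENNReal.ofReal r *
      ∫⁻ θ in Ioo (-Real.pi) Real.pi, g (circleMap c r θ) := by
  have hmem {r : ℝ} (hr : r ∈ Ioi 0) (θ : ℝ) : circleMap c r θ ∈ ball c R ↔ r ∈ Iio R := by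
    rw [mem_ball, dist_eq_norm, circleMap_sub_center, norm_circleMap_zero, abs_of_pos hr, mem_Iio]
  rw [← lintegral_indicator measurableSet_ball,
    lintegral_eq_lintegral_circleMap c hg, ← Iio_inter_Ioi (a := R),
    ← setLIntegral_indicator measurableSet_Iio]
  refine setLIntegral_congr_fun measurableSet_Ioi fun r hr ↦ ?_
  by_cases hrR : r ∈ Iio R <;> simp [indicator, hmem hr, hrR]

lemma ofReal_mul_volume_ball_le_lintegral_enorm {u : ℂ → ℝ} {c : ℂ} {R : ℝ}
    (hu : ContinuousOn u (ball c R)) (hc : ∀ r ∈ Ioo 0 R, u c ≤ Real.circleAverage u c r) :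
    ENNReal.ofReal (u c) * volume (ball c R) ≤ ∫⁻ z in ball c R, ‖u z‖ₑ := by
  have hmeas : Measurable ((ball c R).indicator fun z ↦ ‖u z‖ₑ) := by
    classical
    rw [← piecewise_eq_indicator]
    exact hu.enorm.measurable_piecewise continuousOn_const measurableSet_ball
  rw [← setLIntegral_one, lintegral_ball_eq_lintegral_circleMap c R hmeas,
    lintegral_ball_eq_lintegral_circleMap c R (measurable_const.indicator measurableSet_ball),
    ← lintegral_const_mul' _ _ ENNReal.ofReal_ne_top]
  refine setLIntegral_mono' measurableSet_Ioo fun r hr ↦ ?_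
  have hlen : ∫⁻ _ in Ioo (-Real.pi) Real.pi, 1 = ENNReal.ofReal (2 * Real.pi) := by
    rw [setLIntegral_one, Real.volume_Ioo]; ring_nf
  rw [hlen, mul_left_comm, mul_comm (ENNReal.ofReal (u c))]
  gcongr
  calc ENNReal.ofReal (2 * Real.pi) * ENNReal.ofReal (u c)
      ≤ ENNReal.ofReal (2 * Real.pi) * ‖Real.circleAverage u c r‖ₑ := by
        gcongr
        exact (ENNReal.ofReal_le_ofReal (hc r hr)).trans (Real.ofReal_le_enorm _)
    _ ≤ ∫⁻ θ in Ioo (-Real.pi) Real.pi, ‖u (circleMap c r θ)‖ₑ :=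
        enorm_circleAverage_le_lintegral_enorm u c r

lemma ofReal_norm_rpow_mul_dA_ball_le {f : ℂ → ℂ} {c : ℂ} {R p : ℝ}
    (hf : DifferentiableOn ℂ f (ball c R)) (hp : 0 < p) :
    ENNReal.ofReal (‖f c‖ ^ p) * dA (ball c R) ≤
      ∫⁻ z in ball c R, ENNReal.ofReal (‖f z‖ ^ p) ∂dA := by
  have hcirc : ∀ r ∈ Ioo 0 R, ‖f c‖ ^ p ≤ Real.circleAverage (fun z ↦ ‖f z‖ ^ p) c r :=
    fun r hr ↦ norm_rpow_le_circleAverage ((hf.analyticOnNhd isOpen_ball).mono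
      (closedBall_subset_ball (by rw [abs_of_pos hr.1]; exact hr.2))) hp
  have harea := ofReal_mul_volume_ball_le_lintegral_enorm
    (hf.continuousOn.norm.rpow_const fun _ _ ↦ .inr hp.le) hcirc
  simp only [Real.enorm_eq_ofReal (Real.rpow_nonneg (norm_nonneg _) p)] at harea
  rw [dA, Measure.smul_apply, Measure.restrict_smul, lintegral_smul_measure, smul_eq_mul,
    smul_eq_mul, mul_left_comm]
  gcongr

/-- The annulus `(1 - r) / 2 < 1 - |z| < 3 (1 - r) / 2` about the circle `|z| = r`, on which the
distance to the unit circle is comparable with `1 - r`. The factors are chosen so that it contains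
the disc of radius `(1 - r) / 2` about each point of that circle. -/
def whitneyAnnulus (r : ℝ) : Set ℂ :=
  {z | 1 - ‖z‖ ∈ Ioo ((1 - r) / 2) (3 * (1 - r) / 2)}

lemma ball_subset_whitneyAnnulus (w : ℂ) : ball w ((1 - ‖w‖) / 2) ⊆ whitneyAnnulus ‖w‖ := by
  intro z hz
  have hdist := (abs_lt.1 ((abs_norm_sub_norm_le z w).trans_lt (mem_ball_iff_norm.1 hz)))
  constructor <;> linarith

lemma mem_whitneyAnnulus_iff {r : ℝ} {z : ℂ} :
    z ∈ whitneyAnnulus r ↔ 1 - r ∈ Ioo (2 * (1 - ‖z‖) / 3) (2 * (1 - ‖z‖)) := by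
  simp only [whitneyAnnulus, mem_ofPred_eq, mem_Ioo]
  constructor <;> rintro ⟨h₁, h₂⟩ <;> constructor <;> linarith

lemma whitneyAnnulus_subset_ball {r : ℝ} (hr : r ≤ 1) : whitneyAnnulus r ⊆ ball 0 1 := by
  intro z hz
  rw [mem_ball_zero_iff]
  linarith [hz.1]

lemma measurableSet_setOf_mem_whitneyAnnulus :
    MeasurableSet {q : ℝ × ℂ | q.2 ∈ whitneyAnnulus q.1} :=
  (measurableSet_lt (f := fun q : ℝ × ℂ ↦ (1 - q.1) / 2) (by fun_prop) (by fun_prop)).inter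
    (measurableSet_lt (f := fun q : ℝ × ℂ ↦ 1 - ‖q.2‖) (by fun_prop) (by fun_prop))

lemma min_rpow_le_rpow {a b x : ℝ} (ha : 0 < a) (hax : a ≤ x) (hxb : x ≤ b) (α : ℝ) :
    min (a ^ α) (b ^ α) ≤ x ^ α := by
  rcases le_total 0 α with hα | hα
  · exact (min_le_left _ _).trans (by gcongr)
  · exact (min_le_right _ _).trans (Real.rpow_le_rpow_of_nonpos (ha.trans_le hax) hxb hα)

lemma min_rpow_mul_one_sub_rpow_le {r : ℝ} (hr : r < 1) {z : ℂ} (hz : z ∈ whitneyAnnulus r)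
    (α : ℝ) :
    min ((1 / 2) ^ α) (3 ^ α) * (1 - r) ^ α ≤ (1 - ‖z‖ ^ 2) ^ α := by
  have hs : 0 < 1 - r := sub_pos.2 hr
  have hlow : 1 / 2 ≤ (1 - ‖z‖ ^ 2) / (1 - r) := by
    rw [le_div_iff₀ hs]; nlinarith [hz.1, norm_nonneg z]
  have hupp : (1 - ‖z‖ ^ 2) / (1 - r) ≤ 3 := by
    rw [div_le_iff₀ hs]; nlinarith [hz.2, norm_nonneg z, sq_nonneg (1 - ‖z‖)]
  calc min ((1 / 2) ^ α) (3 ^ α) * (1 - r) ^ α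
      ≤ ((1 - ‖z‖ ^ 2) / (1 - r)) ^ α * (1 - r) ^ α := by
        gcongr; exact min_rpow_le_rpow (by norm_num) hlow hupp α
    _ = (1 - ‖z‖ ^ 2) ^ α := by
        rw [← Real.mul_rpow (by linarith) hs.le, div_mul_cancel₀ _ hs.ne']

/-- The measure `(1 - |z|²)^α |f(z)|^p dA` on the unit disc, whose mass is the `p`-th power of the
Bergman norm of `f` up to the factor `α + 1`. -/
noncomputable def bergmanMeasure (p α : ℝ) (f : ℂ → ℂ) : Measure ℂ :=
  (dA.restrict (ball 0 1)).withDensity fun z ↦ ENNReal.ofReal ((1 - ‖z‖ ^ 2) ^ α * ‖f z‖ ^ p)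

instance (p α : ℝ) (f : ℂ → ℂ) : SFinite (bergmanMeasure p α f) := by
  unfold bergmanMeasure dA; infer_instance

lemma bergmanMeasure_apply_of_subset (p α : ℝ) (f : ℂ → ℂ) {s : Set ℂ} (hs : MeasurableSet s)
    (h : s ⊆ ball 0 1) :
    bergmanMeasure p α f s =
      ∫⁻ z in s, ENNReal.ofReal ((1 - ‖z‖ ^ 2) ^ α * ‖f z‖ ^ p) ∂dA := by
  rw [bergmanMeasure, withDensity_apply _ hs, Measure.restrict_restrict hs,
    inter_eq_left.2 h]

lemma bergmanNorm_rpow {p : ℝ} (hp : p ≠ 0) (α : ℝ) (f : ℂ → ℂ) :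
    bergmanNorm p α f ^ p = ENNReal.ofReal (α + 1) * bergmanMeasure p α f (ball 0 1) := by
  rw [bergmanNorm, bergmanMeasure_apply_of_subset p α f measurableSet_ball subset_rfl,
    ← ENNReal.rpow_mul, one_div_mul_cancel hp, ENNReal.rpow_one]

lemma exists_norm_rpow_mul_le_bergmanMeasure {p : ℝ} (hp : 0 < p) (α : ℝ) :
    ∃ K > 0, ∀ f : ℂ → ℂ, DifferentiableOn ℂ f (ball 0 1) → ∀ w ∈ ball (0 : ℂ) 1,
      ENNReal.ofReal (‖f w‖ ^ p * (1 - ‖w‖) ^ (α + 2)) ≤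
        ENNReal.ofReal K * bergmanMeasure p α f (whitneyAnnulus ‖w‖) := by
  set k : ℝ := min ((1 / 2) ^ α) (3 ^ α)
  have hk : 0 < k := lt_min (by positivity) (by positivity)
  refine ⟨4 / k, by positivity, fun f hf w hw ↦ ?_⟩
  have hw1 : ‖w‖ < 1 := mem_ball_zero_iff.1 hw
  have hs : 0 < 1 - ‖w‖ := sub_pos.2 hw1
  set B : Set ℂ := ball w ((1 - ‖w‖) / 2)
  have hBmeas : MeasurableSet B := measurableSet_ball
  have hB : B ⊆ ball 0 1 := (ball_subset_whitneyAnnulus w).trans (whitneyAnnulus_subset_ball hw1.le)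
  calc ENNReal.ofReal (‖f w‖ ^ p * (1 - ‖w‖) ^ (α + 2))
      = ENNReal.ofReal (4 / k) * (ENNReal.ofReal (k * (1 - ‖w‖) ^ α) *
          (ENNReal.ofReal (‖f w‖ ^ p) * dA B)) := by
        rw [dA_ball _ (by linarith), ← ENNReal.ofReal_mul (by positivity),
          ← ENNReal.ofReal_mul (by positivity), ← ENNReal.ofReal_mul (by positivity),
          Real.rpow_add hs, Real.rpow_two]
        congr 1
        field_simp
        norm_num
    _ ≤ ENNReal.ofReal (4 / k) * (ENNReal.ofReal (k * (1 - ‖w‖) ^ α) *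
          ∫⁻ z in B, ENNReal.ofReal (‖f z‖ ^ p) ∂dA) := by
        gcongr; exact ofReal_norm_rpow_mul_dA_ball_le (hf.mono hB) hp
    _ ≤ ENNReal.ofReal (4 / k) * bergmanMeasure p α f B := by
        rw [bergmanMeasure_apply_of_subset p α f hBmeas hB,
          ← lintegral_const_mul' _ _ ENNReal.ofReal_ne_top]
        gcongr ENNReal.ofReal (4 / k) * ?_
        refine setLIntegral_mono' hBmeas fun z hz ↦ ?_
        rw [← ENNReal.ofReal_mul (by positivity)]
        gcongr
        exact min_rpow_mul_one_sub_rpow_le hw1 (ball_subset_whitneyAnnulus w hz) α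
    _ ≤ ENNReal.ofReal (4 / k) * bergmanMeasure p α f (whitneyAnnulus ‖w‖) := by
        gcongr; exact ball_subset_whitneyAnnulus w

lemma Minf_nonneg (f : ℂ → ℂ) (r : ℝ) : 0 ≤ Minf f r :=
  Real.iSup_nonneg fun _ ↦ Real.iSup_nonneg fun _ ↦ norm_nonneg _

lemma exists_mem_sphere_Minf_le_norm {f : ℂ → ℂ} {r : ℝ} (hr : 0 ≤ r)
    (hf : ContinuousOn f (sphere 0 r)) : ∃ w ∈ sphere (0 : ℂ) r, Minf f r ≤ ‖f w‖ := by
  obtain ⟨w, hw, hmax⟩ := (isCompact_sphere (0 : ℂ) r).exists_isMaxOn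
    (NormedSpace.sphere_nonempty.2 hr) hf.norm
  exact ⟨w, hw, Real.iSup_le (fun z ↦ Real.iSup_le (fun hz ↦ hmax hz) (norm_nonneg _))
    (norm_nonneg _)⟩

lemma exists_Minf_rpow_mul_le_bergmanMeasure {p : ℝ} (hp : 0 < p) (α : ℝ) :
    ∃ K > 0, ∀ f : ℂ → ℂ, DifferentiableOn ℂ f (ball 0 1) → ∀ r ∈ Ico (0 : ℝ) 1,
      ENNReal.ofReal (Minf f r ^ p * (1 - r) ^ (α + 1)) ≤
        ENNReal.ofReal K *
          (ENNReal.ofReal (1 - r)⁻¹ * bergmanMeasure p α f (whitneyAnnulus r)) := by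
  obtain ⟨K, hK, hbound⟩ := exists_norm_rpow_mul_le_bergmanMeasure hp α
  refine ⟨K, hK, fun f hf r ⟨hr0, hr1⟩ ↦ ?_⟩
  have hs : 0 < 1 - r := sub_pos.2 hr1
  obtain ⟨w, hw, hmax⟩ := exists_mem_sphere_Minf_le_norm hr0
    (hf.continuousOn.mono (sphere_subset_ball hr1))
  obtain rfl : ‖w‖ = r := mem_sphere_zero_iff_norm.1 hw
  calc ENNReal.ofReal (Minf f ‖w‖ ^ p * (1 - ‖w‖) ^ (α + 1))
      ≤ ENNReal.ofReal (‖f w‖ ^ p * (1 - ‖w‖) ^ (α + 1)) := by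
        have := Minf_nonneg f ‖w‖
        gcongr
    _ = ENNReal.ofReal (1 - ‖w‖)⁻¹ * ENNReal.ofReal (‖f w‖ ^ p * (1 - ‖w‖) ^ (α + 2)) := by
        rw [← ENNReal.ofReal_mul (by positivity), show α + 2 = α + 1 + 1 by ring,
          Real.rpow_add_one hs.ne' (α + 1)]
        congr 1
        field_simp
    _ ≤ _ := by
        rw [mul_left_comm]
        gcongr
        exact hbound f hf w (sphere_subset_ball hr1 hw)

/-- The Carleson condition on `[0, 1)` with explicit constant `C`. The constant is in `[0, ∞]`, so
that the inequality is between measures and involves no conversion to real numbers. -/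
def IsCarlesonWith (C : ℝ≥0∞) (μ : Measure ℝ) : Prop :=
  ∀ t ∈ Ico (0 : ℝ) 1, μ (Ico t 1) ≤ C * ENNReal.ofReal (1 - t)

lemma isCarlesonWith_ofReal {C : ℝ} {μ : Measure ℝ} [IsFiniteMeasure μ] (hC : 0 ≤ C)
    (hμ : ∀ t ∈ Ico (0 : ℝ) 1, (μ (Ico t 1)).toReal ≤ C * (1 - t)) :
    IsCarlesonWith (ENNReal.ofReal C) μ := fun t ht ↦ by
  rw [← ENNReal.ofReal_mul hC]
  exact (ENNReal.le_ofReal_iff_toReal_le (measure_ne_top _ _)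
    (mul_nonneg hC (sub_nonneg.2 ht.2.le))).2 (hμ t ht)

lemma IsCarlesonWith.setLIntegral_inv_le {C : ℝ≥0∞} {μ : Measure ℝ} (hμ : IsCarlesonWith C μ)
    {a b : ℝ} (ha : 0 < a) :
    ∫⁻ r in {r ∈ Ico 0 1 | 1 - r ∈ Ioo a b}, ENNReal.ofReal (1 - r)⁻¹ ∂μ ≤
      C * ENNReal.ofReal (b / a) := by
  rcases le_or_gt b a with hba | hab
  · simp [Ioo_eq_empty_of_le hba]
  have hsub : {r ∈ Ico (0 : ℝ) 1 | 1 - r ∈ Ioo a b} ⊆ Ico (max 0 (1 - b)) 1 :=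
    fun r ⟨hr, hrab⟩ ↦ ⟨max_le hr.1 (by linarith [hrab.2]), hr.2⟩
  calc ∫⁻ r in {r ∈ Ico 0 1 | 1 - r ∈ Ioo a b}, ENNReal.ofReal (1 - r)⁻¹ ∂μ
      ≤ ∫⁻ _ in {r ∈ Ico 0 1 | 1 - r ∈ Ioo a b}, ENNReal.ofReal a⁻¹ ∂μ := by
        refine setLIntegral_mono measurable_const fun r ⟨_, hr⟩ ↦ ?_
        gcongr
        exact hr.1.le
    _ ≤ ENNReal.ofReal a⁻¹ * μ (Ico (max 0 (1 - b)) 1) := by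
        rw [setLIntegral_const]; gcongr
    _ ≤ ENNReal.ofReal a⁻¹ * (C * ENNReal.ofReal b) := by
        gcongr
        refine (hμ _ ⟨le_max_left _ _, max_lt one_pos (by linarith)⟩).trans ?_
        gcongr
        linarith [le_max_right 0 (1 - b)]
    _ = C * ENNReal.ofReal (b / a) := by
        rw [mul_left_comm, ← ENNReal.ofReal_mul (by positivity), inv_mul_eq_div]

lemma IsCarlesonWith.setLIntegral_inv_le_of_mem_ball {C : ℝ≥0∞} {μ : Measure ℝ}
    (hμ : IsCarlesonWith C μ) {z : ℂ} (hz : z ∈ ball 0 1) :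
    ∫⁻ r in {r ∈ Ico 0 1 | z ∈ whitneyAnnulus r}, ENNReal.ofReal (1 - r)⁻¹ ∂μ ≤ 3 * C := by
  have hδ : 0 < 1 - ‖z‖ := sub_pos.2 (mem_ball_zero_iff.1 hz)
  have hratio : 2 * (1 - ‖z‖) / (2 * (1 - ‖z‖) / 3) = 3 := by field_simp
  have hbound := hμ.setLIntegral_inv_le (b := 2 * (1 - ‖z‖))
    (show 0 < 2 * (1 - ‖z‖) / 3 by positivity)
  simp_rw [mem_whitneyAnnulus_iff]
  rwa [hratio, ENNReal.ofReal_ofNat, mul_comm C] at hbound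

lemma IsCarlesonWith.lintegral_measure_whitneyAnnulus_le {C : ℝ≥0∞} {μ : Measure ℝ} [SFinite μ]
    (hμ : IsCarlesonWith C μ) (ν : Measure ℂ) [SFinite ν] :
    ∫⁻ r in Ico 0 1, ENNReal.ofReal (1 - r)⁻¹ * ν (whitneyAnnulus r) ∂μ ≤
      3 * C * ν (ball 0 1) := by
  let F : ℝ → ℂ → ℝ≥0∞ := fun r ↦ (whitneyAnnulus r).indicator fun _ ↦ ENNReal.ofReal (1 - r)⁻¹
  have hF : Measurable (Function.uncurry F) :=
    Measurable.indicator (f := fun q : ℝ × ℂ ↦ ENNReal.ofReal (1 - q.1)⁻¹) (by fun_prop)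
      measurableSet_setOf_mem_whitneyAnnulus
  have hslice {r : ℝ} (hr : r ∈ Ico 0 1) :
      ENNReal.ofReal (1 - r)⁻¹ * ν (whitneyAnnulus r) = ∫⁻ z in ball 0 1, F r z ∂ν := by
    have hmeas : MeasurableSet (whitneyAnnulus r) :=
      measurable_prodMk_left measurableSet_setOf_mem_whitneyAnnulus
    rw [lintegral_indicator_const hmeas,
      Measure.restrict_eq_self _ (whitneyAnnulus_subset_ball hr.2.le)]
  have hfiber {z : ℂ} (hz : z ∈ ball 0 1) : ∫⁻ r in Ico 0 1, F r z ∂μ ≤ 3 * C := by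
    have hind : (F · z) =
        {r | z ∈ whitneyAnnulus r}.indicator fun r ↦ ENNReal.ofReal (1 - r)⁻¹ := rfl
    have hmeas : MeasurableSet {r | z ∈ whitneyAnnulus r} :=
      measurable_prodMk_right measurableSet_setOf_mem_whitneyAnnulus
    rw [hind, setLIntegral_indicator hmeas, inter_comm]
    exact hμ.setLIntegral_inv_le_of_mem_ball hz
  calc ∫⁻ r in Ico 0 1, ENNReal.ofReal (1 - r)⁻¹ * ν (whitneyAnnulus r) ∂μ
      = ∫⁻ r in Ico 0 1, ∫⁻ z in ball 0 1, F r z ∂ν ∂μ :=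
        setLIntegral_congr_fun measurableSet_Ico fun r hr ↦ hslice hr
    _ = ∫⁻ z in ball 0 1, ∫⁻ r in Ico 0 1, F r z ∂μ ∂ν :=
        lintegral_lintegral_swap hF.aemeasurable
    _ ≤ ∫⁻ _ in ball 0 1, 3 * C ∂ν := setLIntegral_mono' measurableSet_ball fun z hz ↦ hfiber hz
    _ = 3 * C * ν (ball 0 1) := setLIntegral_const _ _

/-- If `μ` is a Carleson measure on `[0,1)`, `0 < p < ∞` and `α > -1`,
then there is `C = C(p, α, μ) > 0` such that for every `f ∈ A^p_α`,
`∫_{[0,1)} M_∞(r,f)^p (1-r)^{α+1} dμ(r) ≤ C ‖f‖_{A^p_α}^p`. -/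
theorem Minfty_integral_Apa (μ : Measure ℝ) [IsFiniteMeasure μ]
    (hsupp : μ (Ico (0 : ℝ) 1)ᶜ = 0)
    (hμ : ∃ C > 0, ∀ t ∈ Ico (0 : ℝ) 1, (μ (Ico t 1)).toReal ≤ C * (1 - t))
    (p α : ℝ) (hp : 0 < p) (hα : -1 < α) :
    ∃ C > 0, ∀ f : ℂ → ℂ, DifferentiableOn ℂ f (ball (0 : ℂ) 1) → bergmanNorm p α f < ⊤ →
      (∫⁻ r in Ico (0 : ℝ) 1, ENNReal.ofReal (Minf f r ^ p * (1 - r) ^ (α + 1)) ∂μ)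
        ≤ ENNReal.ofReal C * bergmanNorm p α f ^ p := by
  obtain ⟨C₀, hC₀, hcar⟩ := hμ
  obtain ⟨K, hK, hbound⟩ := exists_Minf_rpow_mul_le_bergmanMeasure hp α
  have hα1 : 0 < α + 1 := by linarith
  refine ⟨K * (3 * C₀) / (α + 1), by positivity, fun f hf _ ↦ ?_⟩
  let ν := bergmanMeasure p α f
  calc ∫⁻ r in Ico (0 : ℝ) 1, ENNReal.ofReal (Minf f r ^ p * (1 - r) ^ (α + 1)) ∂μ
      ≤ ∫⁻ r in Ico (0 : ℝ) 1, ENNReal.ofReal K *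
          (ENNReal.ofReal (1 - r)⁻¹ * ν (whitneyAnnulus r)) ∂μ :=
        setLIntegral_mono' measurableSet_Ico (hbound f hf)
    _ = ENNReal.ofReal K *
          ∫⁻ r in Ico (0 : ℝ) 1, ENNReal.ofReal (1 - r)⁻¹ * ν (whitneyAnnulus r) ∂μ :=
        lintegral_const_mul' _ _ ENNReal.ofReal_ne_top
    _ ≤ ENNReal.ofReal K * (3 * ENNReal.ofReal C₀ * ν (ball 0 1)) := by
        gcongr
        exact (isCarlesonWith_ofReal hC₀.le hcar).lintegral_measure_whitneyAnnulus_le ν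
    _ = ENNReal.ofReal (K * (3 * C₀) / (α + 1)) * bergmanNorm p α f ^ p := by
        rw [bergmanNorm_rpow hp.ne', ← mul_assoc (ENNReal.ofReal (_ / _)),
          ← ENNReal.ofReal_mul (by positivity), div_mul_cancel₀ _ hα1.ne', ENNReal.ofReal_mul hK.le,
          ENNReal.ofReal_mul zero_le_three, ENNReal.ofReal_ofNat, ← mul_assoc (ENNReal.ofReal K)]
end

section
/- Suppose k > 0, q > 1, and h is a non-negative measurable function on (0,1). Then ∫_0^1 ( ∫_{1−r}^1 h(t) dt )^q (1−r)^{k−1} dr ≤ (q/k)^q ∫_0^1 h(1−r)^q (1−r)^{q+k−1} dr. -/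
open MeasureTheory Set Metric Filter Asymptotics
open scoped ENNReal

/-!
After the substitution `s = 1 - r` this is Hardy's inequality for tail integrals on the half-line,
applied to `h` cut off at `1`. Put `c = k / q`. Hölder's inequality with respect to the weight
`t ^ (-(1 + c))` bounds `(∫_s^∞ f) ^ q` by
`(s ^ (-c) / c) ^ (q - 1) * ∫_s^∞ f(t) ^ q * t ^ ((q - 1) * (1 + c)) dt`. The choice of `c` turns
the total power of `s` into `s ^ (c - 1)`; Tonelli's theorem and `∫_0^t s ^ (c - 1) ds = t ^ c / c`
then give the constant `c ^ (-q) = (q / k) ^ q`.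
-/

section LinearOrder

variable {α : Type*} [LinearOrder α] [TopologicalSpace α] [OrderClosedTopology α]
  [SecondCountableTopology α] [MeasurableSpace α] [OpensMeasurableSpace α] {μ ν : Measure α}
  [SFinite μ] [SFinite ν] {f : α → α → ℝ≥0∞}

lemma lintegral_setLIntegral_Ioi_swap (hf : AEMeasurable (Function.uncurry f) (μ.prod ν)) :
    ∫⁻ s, ∫⁻ t in Ioi s, f s t ∂ν ∂μ = ∫⁻ t, ∫⁻ s in Iio t, f s t ∂μ ∂ν := by
  have hlt : MeasurableSet {p : α × α | p.1 < p.2} := measurableSet_lt measurable_fst measurable_snd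
  simp_rw [← lintegral_indicator measurableSet_Ioi, ← lintegral_indicator measurableSet_Iio]
  exact lintegral_lintegral_swap (hf.indicator hlt)

lemma setLIntegral_Ioi_setLIntegral_Ioi_swap (a : α)
    (hf : AEMeasurable (Function.uncurry f)
      ((μ.restrict (Ioi a)).prod (ν.restrict (Ioi a)))) :
    ∫⁻ s in Ioi a, ∫⁻ t in Ioi s, f s t ∂ν ∂μ = ∫⁻ t in Ioi a, ∫⁻ s in Ioo a t, f s t ∂μ ∂ν := by
  calc
    _ = ∫⁻ s in Ioi a, ∫⁻ t in Ioi s, f s t ∂ν.restrict (Ioi a) ∂μ := by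
      refine setLIntegral_congr_fun measurableSet_Ioi fun s hs ↦ ?_
      simp_rw [Measure.restrict_restrict measurableSet_Ioi,
        inter_eq_self_of_subset_left (Ioi_subset_Ioi (mem_Ioi.mp hs).le)]
    _ = _ := by
      simp_rw [lintegral_setLIntegral_Ioi_swap hf, Measure.restrict_restrict measurableSet_Iio,
        inter_comm (Iio _), Ioi_inter_Iio]

end LinearOrder

lemma rpow_lintegral_mul_le_lintegral_rpow_mul {α : Type*} [MeasurableSpace α] {μ : Measure α}
    {q : ℝ} (hq : 1 ≤ q) {f w : α → ℝ≥0∞} (hf : AEMeasurable f μ) (hw : AEMeasurable w μ) :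
    (∫⁻ x, f x * w x ∂μ) ^ q ≤ (∫⁻ x, f x ^ q * w x ∂μ) * (∫⁻ x, w x ∂μ) ^ (q - 1) := by
  have hq₀ : 0 < q := one_pos.trans_le hq
  have hq₁ : 0 ≤ 1 - q⁻¹ := sub_nonneg.mpr (inv_le_one_of_one_le₀ hq)
  have split (x : α) : f x * w x = (f x ^ q * w x) ^ q⁻¹ * w x ^ (1 - q⁻¹) := by
    rw [ENNReal.mul_rpow_of_nonneg _ _ (inv_nonneg.mpr hq₀.le), ENNReal.rpow_rpow_inv hq₀.ne',
      mul_assoc, ← ENNReal.rpow_add_of_nonneg _ _ (inv_nonneg.mpr hq₀.le) hq₁,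
      add_sub_cancel, ENNReal.rpow_one]
  calc
    (∫⁻ x, f x * w x ∂μ) ^ q
      ≤ ((∫⁻ x, f x ^ q * w x ∂μ) ^ q⁻¹ * (∫⁻ x, w x ∂μ) ^ (1 - q⁻¹)) ^ q := by
        simp_rw [split]
        gcongr
        exact ENNReal.lintegral_mul_norm_pow_le ((hf.pow_const q).mul hw) hw
          (inv_nonneg.mpr hq₀.le) hq₁ (add_sub_cancel _ _)
    _ = _ := by
        rw [ENNReal.mul_rpow_of_nonneg _ _ hq₀.le, ENNReal.rpow_inv_rpow hq₀.ne',
          ← ENNReal.rpow_mul, sub_mul, one_mul, inv_mul_cancel₀ hq₀.ne']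

lemma lintegral_Ioi_rpow_of_lt {a s : ℝ} (ha : a < -1) (hs : 0 < s) :
    ∫⁻ t in Ioi s, ENNReal.ofReal (t ^ a) = ENNReal.ofReal (-s ^ (a + 1) / (a + 1)) := by
  rw [← integral_Ioi_rpow_of_lt ha hs,
    ofReal_integral_eq_lintegral_ofReal (integrableOn_Ioi_rpow_of_lt ha hs)]
  filter_upwards [ae_restrict_mem measurableSet_Ioi] with t ht
  exact Real.rpow_nonneg (hs.trans ht).le a

lemma lintegral_Ioo_zero_rpow {a t : ℝ} (ha : -1 < a) (ht : 0 < t) :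
    ∫⁻ s in Ioo 0 t, ENNReal.ofReal (s ^ a) = ENNReal.ofReal (t ^ (a + 1) / (a + 1)) := by
  have hint : IntegrableOn (fun s : ℝ ↦ s ^ a) (Ioo 0 t) :=
    (intervalIntegral.integrableOn_Ioo_rpow_iff ht).mpr ha
  rw [← ofReal_integral_eq_lintegral_ofReal hint, ← integral_Ioc_eq_integral_Ioo,
    ← intervalIntegral.integral_of_le ht.le, integral_rpow (.inl ha),
    Real.zero_rpow (by linarith), sub_zero]
  filter_upwards [ae_restrict_mem measurableSet_Ioo] with s hs
  exact Real.rpow_nonneg hs.1.le a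

lemma rpow_lintegral_Ioi_le {c q s : ℝ} (hc : 0 < c) (hq : 1 ≤ q) (hs : 0 < s) {f : ℝ → ℝ≥0∞}
    (hf : AEMeasurable f (volume.restrict (Ioi s))) :
    (∫⁻ t in Ioi s, f t) ^ q ≤
      (∫⁻ t in Ioi s, f t ^ q * ENNReal.ofReal (t ^ ((q - 1) * (1 + c)))) *
        ENNReal.ofReal ((s ^ (-c) / c) ^ (q - 1)) := by
  have weight_integral :
      ∫⁻ t in Ioi s, ENNReal.ofReal (t ^ (-(1 + c))) = ENNReal.ofReal (s ^ (-c) / c) := by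
    rw [lintegral_Ioi_rpow_of_lt (by linarith) hs, show -(1 + c) + 1 = -c by ring,
      neg_div_neg_eq]
  calc
    (∫⁻ t in Ioi s, f t) ^ q
      = (∫⁻ t in Ioi s, f t * ENNReal.ofReal (t ^ (1 + c)) *
          ENNReal.ofReal (t ^ (-(1 + c)))) ^ q := by
        congr 1
        refine setLIntegral_congr_fun measurableSet_Ioi fun t ht ↦ ?_
        have ht₀ : 0 < t := hs.trans ht
        simp_rw [mul_assoc, ← ENNReal.ofReal_mul (Real.rpow_nonneg ht₀.le _),
          ← Real.rpow_add ht₀, add_neg_cancel, Real.rpow_zero, ENNReal.ofReal_one, mul_one]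
    _ ≤ (∫⁻ t in Ioi s, (f t * ENNReal.ofReal (t ^ (1 + c))) ^ q *
          ENNReal.ofReal (t ^ (-(1 + c)))) *
          (∫⁻ t in Ioi s, ENNReal.ofReal (t ^ (-(1 + c)))) ^ (q - 1) :=
        rpow_lintegral_mul_le_lintegral_rpow_mul hq (hf.mul (by fun_prop)) (by fun_prop)
    _ = _ := by
        rw [weight_integral, ENNReal.ofReal_rpow_of_nonneg (by positivity) (by linarith)]
        congr 1
        refine setLIntegral_congr_fun measurableSet_Ioi fun t ht ↦ ?_
        have ht₀ : 0 < t := hs.trans ht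
        rw [ENNReal.mul_rpow_of_nonneg _ _ (by linarith),
          ENNReal.ofReal_rpow_of_nonneg (by positivity) (by linarith), mul_assoc,
          ← ENNReal.ofReal_mul (by positivity), ← Real.rpow_mul ht₀.le, ← Real.rpow_add ht₀]
        ring_nf

lemma rpow_mul_lintegral_Ioo_zero_rpow {c q t : ℝ} (hc : 0 < c) (hq : q ≠ 0) (ht : 0 < t) :
    ENNReal.ofReal (t ^ ((q - 1) * (1 + c))) *
        ∫⁻ s in Ioo 0 t, ENNReal.ofReal (c⁻¹ ^ (q - 1) * s ^ (c - 1)) =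
      ENNReal.ofReal ((q / (c * q)) ^ q) * ENNReal.ofReal (t ^ (q + c * q - 1)) := by
  have hconst : (q / (c * q)) ^ q = c⁻¹ ^ (q - 1) * c⁻¹ := by
    rw [← Real.rpow_add_one (by positivity), sub_add_cancel, div_mul_cancel_right₀ hq]
  have hpow : t ^ (q + c * q - 1) = t ^ ((q - 1) * (1 + c)) * t ^ c := by
    rw [← Real.rpow_add ht]
    ring_nf
  simp_rw [ENNReal.ofReal_mul (Real.rpow_nonneg (inv_nonneg.mpr hc.le) _)]
  rw [lintegral_const_mul _ (by fun_prop), lintegral_Ioo_zero_rpow (by linarith) ht,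
    sub_add_cancel, ← ENNReal.ofReal_mul (by positivity), ← ENNReal.ofReal_mul (by positivity),
    ← ENNReal.ofReal_mul (by rw [hconst]; positivity), hconst, hpow]
  ring_nf

lemma rpow_lintegral_Ioi_mul_rpow_le {c q s : ℝ} (hc : 0 < c) (hq : 1 ≤ q) (hs : 0 < s)
    {f : ℝ → ℝ≥0∞} (hf : AEMeasurable f (volume.restrict (Ioi s))) :
    (∫⁻ t in Ioi s, f t) ^ q * ENNReal.ofReal (s ^ (c * q - 1)) ≤
      (∫⁻ t in Ioi s, f t ^ q * ENNReal.ofReal (t ^ ((q - 1) * (1 + c)))) *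
        ENNReal.ofReal (c⁻¹ ^ (q - 1) * s ^ (c - 1)) := by
  have hpow : (s ^ (-c) / c) ^ (q - 1) * s ^ (c * q - 1) = c⁻¹ ^ (q - 1) * s ^ (c - 1) := by
    rw [div_eq_inv_mul, Real.mul_rpow (by positivity) (by positivity), ← Real.rpow_mul hs.le,
      mul_assoc, ← Real.rpow_add hs]
    ring_nf
  refine (mul_le_mul_left (rpow_lintegral_Ioi_le hc hq hs hf) _).trans_eq ?_
  rw [mul_assoc, ← ENNReal.ofReal_mul (by positivity), hpow]

theorem lintegral_Ioi_rpow_lintegral_Ioi_le {k q : ℝ} (hk : 0 < k) (hq : 1 ≤ q) {f : ℝ → ℝ≥0∞}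
    (hf : AEMeasurable f (volume.restrict (Ioi 0))) :
    ∫⁻ s in Ioi 0, (∫⁻ t in Ioi s, f t) ^ q * ENNReal.ofReal (s ^ (k - 1)) ≤
      ENNReal.ofReal ((q / k) ^ q) *
        ∫⁻ t in Ioi 0, f t ^ q * ENNReal.ofReal (t ^ (q + k - 1)) := by
  obtain ⟨c, hc, rfl⟩ : ∃ c, 0 < c ∧ k = c * q := ⟨k / q, by positivity, by field_simp⟩
  let F (t : ℝ) : ℝ≥0∞ := f t ^ q * ENNReal.ofReal (t ^ ((q - 1) * (1 + c)))
  let W (s : ℝ) : ℝ≥0∞ := ENNReal.ofReal (c⁻¹ ^ (q - 1) * s ^ (c - 1))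
  have hF : AEMeasurable F (volume.restrict (Ioi 0)) := (hf.pow_const q).mul (by fun_prop)
  have hW : Measurable W := by fun_prop
  have tail_le {s : ℝ} (hs : 0 < s) :
      (∫⁻ t in Ioi s, f t) ^ q * ENNReal.ofReal (s ^ (c * q - 1)) ≤
        ∫⁻ t in Ioi s, F t * W s := by
    have hsub : Ioi s ⊆ Ioi 0 := Ioi_subset_Ioi hs.le
    rw [lintegral_mul_const'' _ (hF.mono_set hsub)]
    exact rpow_lintegral_Ioi_mul_rpow_le hc hq hs (hf.mono_set hsub)
  have head_eq {t : ℝ} (ht : 0 < t) :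
      ∫⁻ s in Ioo 0 t, F t * W s =
        ENNReal.ofReal ((q / (c * q)) ^ q) *
          (f t ^ q * ENNReal.ofReal (t ^ (q + c * q - 1))) := by
    rw [lintegral_const_mul _ hW, mul_assoc, rpow_mul_lintegral_Ioo_zero_rpow hc (by positivity) ht,
      mul_left_comm]
  calc
    _ ≤ ∫⁻ s in Ioi 0, ∫⁻ t in Ioi s, F t * W s :=
      setLIntegral_mono' measurableSet_Ioi fun _ ↦ tail_le
    _ = ∫⁻ t in Ioi 0, ∫⁻ s in Ioo 0 t, F t * W s :=
      setLIntegral_Ioi_setLIntegral_Ioi_swap 0 (hF.comp_snd.mul hW.aemeasurable.comp_fst)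
    _ = ∫⁻ t in Ioi 0, ENNReal.ofReal ((q / (c * q)) ^ q) *
          (f t ^ q * ENNReal.ofReal (t ^ (q + c * q - 1))) :=
      setLIntegral_congr_fun measurableSet_Ioi fun _ ↦ head_eq
    _ = _ := lintegral_const_mul' _ _ ENNReal.ofReal_ne_top

theorem lintegral_Ioo_rpow_lintegral_Ioo_le {b k q : ℝ} (hk : 0 < k) (hq : 1 ≤ q)
    {f : ℝ → ℝ≥0∞} (hf : AEMeasurable f (volume.restrict (Ioo 0 b))) :
    ∫⁻ s in Ioo 0 b, (∫⁻ t in Ioo s b, f t) ^ q * ENNReal.ofReal (s ^ (k - 1)) ≤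
      ENNReal.ofReal ((q / k) ^ q) *
        ∫⁻ t in Ioo 0 b, f t ^ q * ENNReal.ofReal (t ^ (q + k - 1)) := by
  have hq₀ : 0 < q := one_pos.trans_le hq
  have hmeas : AEMeasurable ((Iio b).indicator f) (volume.restrict (Ioi 0)) := by
    rwa [aemeasurable_indicator_iff measurableSet_Iio,
      Measure.restrict_restrict measurableSet_Iio, Iio_inter_Ioi]
  calc
    _ = ∫⁻ s in Ioo 0 b, (∫⁻ t in Ioi s, (Iio b).indicator f t) ^ q *
          ENNReal.ofReal (s ^ (k - 1)) := by
      simp_rw [setLIntegral_indicator measurableSet_Iio, Iio_inter_Ioi]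
    _ ≤ ∫⁻ s in Ioi 0, (∫⁻ t in Ioi s, (Iio b).indicator f t) ^ q *
          ENNReal.ofReal (s ^ (k - 1)) := lintegral_mono_set Ioo_subset_Ioi_self
    _ ≤ ENNReal.ofReal ((q / k) ^ q) * ∫⁻ t in Ioi 0, (Iio b).indicator f t ^ q *
          ENNReal.ofReal (t ^ (q + k - 1)) := lintegral_Ioi_rpow_lintegral_Ioi_le hk hq hmeas
    _ = _ := by
      have hcut : (fun t ↦ (Iio b).indicator f t ^ q * ENNReal.ofReal (t ^ (q + k - 1))) =
          (Iio b).indicator fun t ↦ f t ^ q * ENNReal.ofReal (t ^ (q + k - 1)) := by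
        ext t
        by_cases ht : t < b <;> simp [ht, hq₀]
      rw [hcut, setLIntegral_indicator measurableSet_Iio, Iio_inter_Ioi]

lemma setLIntegral_Ioo_comp_sub_left (f : ℝ → ℝ≥0∞) (a b c : ℝ) :
    ∫⁻ x in Ioo a b, f (c - x) = ∫⁻ x in Ioo (c - b) (c - a), f x := by
  rw [← (volume.measurePreserving_sub_left c).setLIntegral_comp_preimage_emb
    (measurableEmbedding_subLeft c), preimage_const_sub_Ioo]
  simp_rw [sub_sub_cancel]

theorem hardy_type_inequality_general {b k q : ℝ} (hk : 0 < k) (hq : 1 ≤ q) {h : ℝ → ℝ≥0∞}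
    (hmeas : AEMeasurable h (volume.restrict (Ioo 0 b))) :
    ∫⁻ r in Ioo 0 b, (∫⁻ t in Ioo (b - r) b, h t) ^ q * ENNReal.ofReal ((b - r) ^ (k - 1)) ≤
      ENNReal.ofReal ((q / k) ^ q) *
        ∫⁻ r in Ioo 0 b, h (b - r) ^ q * ENNReal.ofReal ((b - r) ^ (q + k - 1)) := by
  rw [setLIntegral_Ioo_comp_sub_left
      (fun s ↦ (∫⁻ t in Ioo s b, h t) ^ q * ENNReal.ofReal (s ^ (k - 1))),
    setLIntegral_Ioo_comp_sub_left (fun s ↦ h s ^ q * ENNReal.ofReal (s ^ (q + k - 1))),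
    sub_self, sub_zero]
  exact lintegral_Ioo_rpow_lintegral_Ioo_le hk hq hmeas

/-- (Hardy-type inequality.) If `k > 0`, `q > 1` and `h ≥ 0` is measurable
on `(0,1)`, then
`∫_0^1 (∫_{1-r}^1 h(t) dt)^q (1-r)^{k-1} dr ≤ (q/k)^q ∫_0^1 h(1-r)^q (1-r)^{q+k-1} dr`. -/
theorem hardy_type_inequality (k q : ℝ) (hk : 0 < k) (hq : 1 < q)
    (h : ℝ → ℝ) (hmeas : Measurable h) (hnonneg : ∀ t ∈ Ioo (0 : ℝ) 1, 0 ≤ h t) :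
    (∫⁻ r in Ioo (0 : ℝ) 1,
        (∫⁻ t in Ioo (1 - r) 1, ENNReal.ofReal (h t)) ^ q * ENNReal.ofReal ((1 - r) ^ (k - 1)))
      ≤ ENNReal.ofReal ((q / k) ^ q) *
        ∫⁻ r in Ioo (0 : ℝ) 1,
          ENNReal.ofReal (h (1 - r)) ^ q * ENNReal.ofReal ((1 - r) ^ (q + k - 1)) :=
  hardy_type_inequality_general hk hq.le hmeas.ennreal_ofReal.aemeasurable
end
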